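/- arXiv:2511.01509 — 2 statements merged into one kernel-verified Lean document; each statement's English description precedes it below -/
import Mathlib

section
/- Let k ≥ 4 and 1 ≤ s ≤ k−1. For any two distinct nonadjacent vertices u, v of H_k(s) both lying in A ∪ B ∪ D, the graph H_k(s) + uv has a Hamilton cycle (a cycle through all 2k+1 vertices). The same holds for H_k(M_2): for any two distinct nonadjacent vertices u, v of H_k(M_2) both lying in A ∪ B ∪ D, the graph H_k(M_2) + uv has a Hamilton cycle. -/
open SimpleGraph

/-- The number of edges of a simple graph. -/
noncomputable def edgeCount {V : Type*} (G : SimpleGraph V) : ℕ := G.edgeSet.ncard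

/-- `H` occurs as a subgraph of `G` (there is an injective map preserving adjacency). -/
def ContainsCopy {V W : Type*} (G : SimpleGraph V) (H : SimpleGraph W) : Prop :=
  ∃ f : W → V, Function.Injective f ∧ ∀ a b : W, H.Adj a b → G.Adj (f a) (f b)

/-- The Turán number `ex(n, H)`: the maximum number of edges of an `H`-free
simple graph on `n` vertices. -/
noncomputable def exNum (n : ℕ) {W : Type*} (H : SimpleGraph W) : ℕ :=
  sSup {m | ∃ G : SimpleGraph (Fin n), ¬ ContainsCopy G H ∧ edgeCount G = m}

/-- `h(n,k,a) = C(k-a,2) + a(n-k+a)`. -/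
def hFun (n k a : ℕ) : ℕ := (k - a).choose 2 + a * (n - k + a)

/-- `c(n,m,ℓ) = C(m-1,2) + t·C(ℓ-1,2) + C(r,2)` where `n = (m-1) + t(ℓ-1) + r`,
`0 ≤ r < ℓ-1`. -/
def cFun (n m l : ℕ) : ℕ :=
  (m - 1).choose 2 + ((n - (m - 1)) / (l - 1)) * ((l - 1).choose 2)
    + ((n - (m - 1)) % (l - 1)).choose 2

/-- A graph is 2-connected if it has at least 3 vertices and removing any
single vertex leaves a connected graph. -/
def TwoConnected {V : Type*} [Fintype V] (G : SimpleGraph V) : Prop :=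
  3 ≤ Fintype.card V ∧ ∀ v : V, (G.induce ({v}ᶜ : Set V)).Connected

/-- The circumference of a graph: the length of a longest cycle
(`0` if there is no cycle). -/
noncomputable def circumference {V : Type*} (G : SimpleGraph V) : ℕ :=
  sSup {m | ∃ (v : V) (c : G.Walk v v), c.IsCycle ∧ c.length = m}

/-- The number of neighbours (in `G`) of `x` lying on the walk `p`. -/
noncomputable def degOn {V : Type*} (G : SimpleGraph V) {a b : V} (p : G.Walk a b) (x : V) : ℕ :=
  {v | v ∈ p.support ∧ G.Adj x v}.ncard

/-- The graph obtained from `G` by adding the edge `uv`. -/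
def addEdge {V : Type*} (G : SimpleGraph V) (u v : V) : SimpleGraph V :=
  G ⊔ SimpleGraph.fromEdgeSet {s(u, v)}

/-- The minimum degree of a graph (with classical decidability). -/
noncomputable def minDeg {V : Type*} [Fintype V] (G : SimpleGraph V) : ℕ :=
  @SimpleGraph.minDegree _ G _ (Classical.decRel _)
open SimpleGraph

/-- Membership (as 0-indexed natural) in the set `C` of `H_k(s)`:
`C = {x_{s+1}, x_{s+3}, …, x_{2k-s+1}}` (1-indexed). -/
def inC_HkS (k s i : ℕ) : Prop := s ≤ i ∧ i ≤ 2 * k - s ∧ (i - s) % 2 = 0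

/-- Membership in the set `D` of `H_k(s)`: `D = {x_{s+2}, …, x_{2k-s}}` (1-indexed). -/
def inD_HkS (k s i : ℕ) : Prop := s ≤ i ∧ i ≤ 2 * k - s ∧ (i - s) % 2 = 1

/-- The graph `H_k(s)`: the path `x_1 … x_{2k+1}` (here 0-indexed on `Fin (2k+1)`),
plus all edges inside `A = {x_1,…,x_s}`, all edges inside `B = {x_{2k-s+2},…,x_{2k+1}}`,
and all edges between `A ∪ B` and `C = {x_{s+1}, x_{s+3}, …, x_{2k-s+1}}`. -/
def HkS (k s : ℕ) : SimpleGraph (Fin (2 * k + 1)) :=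
  SimpleGraph.fromRel (fun x y =>
    ((y : ℕ) = (x : ℕ) + 1) ∨
    ((x : ℕ) < s ∧ (y : ℕ) < s) ∨
    (2 * k - s + 1 ≤ (x : ℕ) ∧ 2 * k - s + 1 ≤ (y : ℕ)) ∨
    (((x : ℕ) < s ∨ 2 * k - s + 1 ≤ (x : ℕ)) ∧ inC_HkS k s (y : ℕ)))

/-- Membership in the part `C` (of size `k-1`) of `H_k(M_2)` (0-indexed):
`C = {x_3, x_5, …, x_{2k-1}}` (1-indexed). -/
def inC_HkM2 (k i : ℕ) : Prop := 2 ≤ i ∧ i ≤ 2 * k - 2 ∧ i % 2 = 0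

/-- Membership in `D` of `H_k(M_2)` (0-indexed): `D = {x_4, x_6, …, x_{2k-2}}` (1-indexed). -/
def inD_HkM2 (k i : ℕ) : Prop := 3 ≤ i ∧ i ≤ 2 * k - 3 ∧ i % 2 = 1

/-- The graph `H_k(M_2)`: the complete bipartite graph with parts
`C = {x_3,x_5,…,x_{2k-1}}` (size `k-1`) and `A ∪ B ∪ D` (size `k+2`), where
`A = {x_1,x_2}`, `B = {x_{2k},x_{2k+1}}`, `D = {x_4,…,x_{2k-2}}`, together with the
matching edges `x_1x_2` and `x_{2k}x_{2k+1}` (here 0-indexed on `Fin (2k+1)`). -/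
def HkM2 (k : ℕ) : SimpleGraph (Fin (2 * k + 1)) :=
  SimpleGraph.fromRel (fun x y =>
    ((x : ℕ) = 0 ∧ (y : ℕ) = 1) ∨
    ((x : ℕ) = 2 * k - 1 ∧ (y : ℕ) = 2 * k) ∨
    (inC_HkM2 k (x : ℕ) ∧ ¬ inC_HkM2 k (y : ℕ)))

/-- Membership in the part `B = {b_1, …, b_{k-1}}` of `H_k(P_3)`; on `Fin (2k+1)` we take
`a_1 = 0, a_2 = 1, a_3 = 2`, `B = {3, …, k+1}`, `C = {k+2, …, 2k}`. -/
def inB_HkP3 (k i : ℕ) : Prop := 3 ≤ i ∧ i ≤ k + 1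

/-- Membership in the set `C = {c_1, …, c_{k-1}}` of `H_k(P_3)`. -/
def inC_HkP3 (k i : ℕ) : Prop := k + 2 ≤ i ∧ i ≤ 2 * k

/-- The graph `H_k(P_3)`: the complete bipartite graph `K_{k-1,k+2}` with parts
`B = {b_1,…,b_{k-1}}` and `A ∪ C` where `A = {a_1,a_2,a_3}`, `C = {c_1,…,c_{k-1}}`,
plus the edges `a_1a_2` and `a_2a_3`. Here `a_1 = 0, a_2 = 1, a_3 = 2`,
`B = {3,…,k+1}`, `C = {k+2,…,2k}` on `Fin (2k+1)`. -/
def HkP3 (k : ℕ) : SimpleGraph (Fin (2 * k + 1)) :=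
  SimpleGraph.fromRel (fun x y =>
    ((x : ℕ) = 0 ∧ (y : ℕ) = 1) ∨
    ((x : ℕ) = 1 ∧ (y : ℕ) = 2) ∨
    (inB_HkP3 k (x : ℕ) ∧ ¬ inB_HkP3 k (y : ℕ)))

/-- The graph `F_k(t)`: the path `x_1 … x_{2k+t}` (0-indexed on `Fin (2k+t)`), plus all
edges inside `A = {x_1,…,x_k}`, all edges inside `B = {x_{k+t+1},…,x_{2k+t}}`, all edges
between `x_k` and `B`, and all edges between `x_{k+t+1}` and `A`. -/
def FkT (k t : ℕ) : SimpleGraph (Fin (2 * k + t)) :=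
  SimpleGraph.fromRel (fun x y =>
    ((y : ℕ) = (x : ℕ) + 1) ∨
    ((x : ℕ) < k ∧ (y : ℕ) < k) ∨
    (k + t ≤ (x : ℕ) ∧ k + t ≤ (y : ℕ)) ∨
    ((x : ℕ) = k - 1 ∧ k + t ≤ (y : ℕ)) ∨
    ((x : ℕ) = k + t ∧ (y : ℕ) < k))

/-- The graph `H(n,k,a)`: vertices `{0,…,k-2a-1} = A`, `{k-2a,…,k-a-1} = B`,
`{k-a,…,n-1} = C`; all edges inside `A ∪ B` and all edges between `B` and `C`. -/
def Hgraph (n k a : ℕ) : SimpleGraph (Fin n) :=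
  SimpleGraph.fromRel (fun x y =>
    ((x : ℕ) < k - a ∧ (y : ℕ) < k - a) ∨
    (k - 2 * a ≤ (x : ℕ) ∧ (x : ℕ) < k - a ∧ k - a ≤ (y : ℕ)))

/-- The graph `Z(n,k,t)` (for `n = (k-t-2) + ℓ(t-1) + 2`): two universal mutually adjacent
vertices `0, 1`, a clique `K_{k-t-2}` on `{2,…,k-t-1}`, and consecutive blocks of size
`t-1` on the remaining vertices, each forming a clique `K_{t-1}`. -/
def Zgraph (n k t : ℕ) : SimpleGraph (Fin n) :=
  SimpleGraph.fromRel (fun x y =>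
    ((x : ℕ) < 2) ∨ ((y : ℕ) < 2) ∨
    (2 ≤ (x : ℕ) ∧ (x : ℕ) < k - t ∧ 2 ≤ (y : ℕ) ∧ (y : ℕ) < k - t) ∨
    (k - t ≤ (x : ℕ) ∧ k - t ≤ (y : ℕ) ∧
      ((x : ℕ) - (k - t)) / (t - 1) = ((y : ℕ) - (k - t)) / (t - 1)))

/-!
The only neighbours of a vertex of `A` in `H_k(s)` are the other vertices of `A` and those of `C`,
so any two vertices of `A` are interchanged by an automorphism fixing the rest, and likewise for
`B`. Hence we may assume that the new edge `x_i x_j`, `i < j`, joins two vertices of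
`D ∪ {x_s, x_{2k-s+2}}`. Then `x_{i+1}` and `x_{j-1}` lie in `C`, so `x_1 x_{j-1}` and
`x_{i+1} x_{2k+1}` are edges, and `x_1 … x_i x_j … x_{2k+1} x_{i+1} … x_{j-1} x_1` is a Hamilton
cycle. Finally, `H_k(2)` is a spanning subgraph of `H_k(M_2)` with the same set `C`.
-/

theorem isHamiltonianCycle_cons {V : Type*} [DecidableEq V] {G : SimpleGraph V} {a b : V}
    {p : G.Walk a b} (hp : p.IsHamiltonian) (hlen : 2 ≤ p.length) (hba : G.Adj b a) :
    (Walk.cons hba p).IsHamiltonianCycle := by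
  refine Walk.isHamiltonianCycle_iff_isCycle_and_support_count_tail_eq_one.mpr ⟨?_, hp⟩
  refine Walk.isCycle_iff_isPath_tail_and_le_length.mpr ⟨?_, ?_⟩
  · simpa using hp.isPath
  · simpa using hlen

section ListCycles

variable {V : Type*} [Fintype V] [DecidableEq V] {G : SimpleGraph V}

theorem isHamiltonian_of_isChain {l : List V} (hchain : l.IsChain G.Adj) (hnodup : l.Nodup)
    (hmem : ∀ x, x ∈ l) (hlen : 3 ≤ l.length) (hne : l ≠ [])
    (hclose : G.Adj (l.getLast hne) (l.head hne)) : G.IsHamiltonian := by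
  intro _
  have hp : (Walk.ofSupport l hne hchain).IsHamiltonian := fun x => by
    rw [Walk.support_ofSupport]
    exact List.count_eq_one_of_mem hnodup (hmem x)
  refine ⟨_, _, isHamiltonianCycle_cons hp ?_ hclose⟩
  rw [Walk.length_ofSupport]
  omega

theorem isHamiltonian_of_segments {l₁ l₂ l₃ : List V}
    (hchain : (l₁ ++ (l₂ ++ l₃)).IsChain G.Adj) (hnodup : (l₁ ++ (l₂ ++ l₃)).Nodup)
    (hmem : ∀ x, x ∈ l₁ ++ (l₂ ++ l₃)) (h₁ : l₁ ≠ []) (h₂ : l₂ ≠ []) (h₃ : l₃ ≠ [])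
    (h₁₃ : G.Adj (l₁.getLast h₁) (l₃.head h₃)) (h₃₂ : G.Adj (l₃.getLast h₃) (l₂.head h₂))
    (h₂₁ : G.Adj (l₂.getLast h₂) (l₁.head h₁)) : G.IsHamiltonian := by
  have hperm : (l₁ ++ (l₃ ++ l₂)).Perm (l₁ ++ (l₂ ++ l₃)) :=
    List.perm_append_comm.append_left l₁
  have hcycle : (l₁ ++ (l₃ ++ l₂)).IsChain G.Adj := by
    have h₂₃ := hchain.right_of_append
    refine hchain.left_of_append.append
      (h₂₃.right_of_append.append h₂₃.left_of_append ?_) ?_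
    · simpa [List.getLast?_eq_some_getLast h₃, List.head?_eq_some_head h₂] using h₃₂
    · simpa [List.getLast?_eq_some_getLast h₁, List.head?_eq_some_head h₃] using h₁₃
  refine isHamiltonian_of_isChain hcycle (hperm.nodup_iff.mpr hnodup)
    (fun x => hperm.mem_iff.mpr (hmem x)) ?_ (by simp [h₁]) ?_
  · have := List.length_pos_iff.mpr h₁
    have := List.length_pos_iff.mpr h₂
    have := List.length_pos_iff.mpr h₃
    simp only [List.length_append]
    omega
  · simpa [List.getLast_append_of_ne_nil, List.head_append_of_ne_nil, h₁, h₂] using h₂₁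

theorem isHamiltonian_of_crossing_chords {l : List V} (hchain : l.IsChain G.Adj)
    (hnodup : l.Nodup) (hmem : ∀ x, x ∈ l) {i j : ℕ} (hij : i + 1 < j) (hj : j < l.length)
    (hchord : G.Adj l[i] l[j]) (hlast : G.Adj l[l.length - 1] l[i + 1])
    (hfirst : G.Adj l[j - 1] l[0]) : G.IsHamiltonian := by
  have hdrop : l.drop j = (l.drop (i + 1)).drop (j - (i + 1)) := by
    rw [List.drop_drop]
    congr 1
    omega
  have hsplit :
      l.take (i + 1) ++ ((l.drop (i + 1)).take (j - (i + 1)) ++ l.drop j) = l := by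
    rw [hdrop, List.take_append_drop, List.take_append_drop]
  have h₁ : l.take (i + 1) ≠ [] := by grind
  have h₂ : (l.drop (i + 1)).take (j - (i + 1)) ≠ [] := by grind
  have h₃ : l.drop j ≠ [] := by grind
  refine isHamiltonian_of_segments (by rwa [hsplit]) (by rwa [hsplit]) (by rwa [hsplit])
    h₁ h₂ h₃ ?_ ?_ ?_
  · simpa [List.getLast_eq_getElem, List.head_eq_getElem,
      min_eq_left (show i + 1 ≤ l.length by omega)] using hchord
  · convert hlast using 1 <;> grind
  · convert hfirst using 1 <;> grind

end ListCycles

section AddEdge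

variable {V : Type*} {G : SimpleGraph V} {u v : V}

theorem addEdge_adj {x y : V} :
    (addEdge G u v).Adj x y ↔ G.Adj x y ∨ s(x, y) = s(u, v) ∧ x ≠ y := by
  simp [addEdge]

theorem addEdge_adj_self (huv : u ≠ v) : (addEdge G u v).Adj u v :=
  addEdge_adj.mpr (.inr ⟨rfl, huv⟩)

theorem le_addEdge : G ≤ addEdge G u v :=
  le_sup_left

theorem addEdge_mono {H : SimpleGraph V} (hGH : G ≤ H) : addEdge G u v ≤ addEdge H u v :=
  sup_le_sup_right hGH _

theorem addEdge_comm : addEdge G u v = addEdge G v u :=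
  congrArg (G ⊔ fromEdgeSet {·}) Sym2.eq_swap

theorem isHamiltonian_addEdge_of_iso [Fintype V] [DecidableEq V] {W : Type*} [Fintype W]
    [DecidableEq W] {H : SimpleGraph W} (e : G ≃g H) (hG : (addEdge G u v).IsHamiltonian) :
    (addEdge H (e u) (e v)).IsHamiltonian := by
  intro hcard
  obtain ⟨_, c, hc⟩ := hG (by rwa [Fintype.card_congr e.toEquiv])
  let f : addEdge G u v →g addEdge H (e u) (e v) :=
    ⟨e, fun hxy => by
      rw [addEdge_adj] at hxy ⊢
      exact hxy.imp e.map_adj_iff.mpr fun h =>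
        ⟨by simpa using congrArg (Sym2.map e) h.1, e.injective.ne h.2⟩⟩
  exact ⟨_, c.map f, hc.map e.bijective⟩

end AddEdge

/-- Vertices with the same neighbours apart from each other (false or true twins): these are the
pairs that can be interchanged by an automorphism fixing every other vertex. -/
def AreTwins {V : Type*} (G : SimpleGraph V) (a b : V) : Prop :=
  ∀ w, w ≠ a → w ≠ b → (G.Adj a w ↔ G.Adj b w)

namespace AreTwins

variable {V : Type*} [DecidableEq V] {G : SimpleGraph V} {a b v : V}

/-- The automorphism interchanging a pair of twins. -/
def swapIso (h : AreTwins G a b) : G ≃g G where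
  toEquiv := Equiv.swap a b
  map_rel_iff' := by
    intro x y
    unfold AreTwins at h
    grind [SimpleGraph.adj_comm, SimpleGraph.irrefl]

theorem isHamiltonian_addEdge [Fintype V] (h : AreTwins G a b) (hva : v ≠ a) (hvb : v ≠ b)
    (hG : (addEdge G b v).IsHamiltonian) : (addEdge G a v).IsHamiltonian := by
  have hswap := isHamiltonian_addEdge_of_iso h.swapIso hG
  rwa [show h.swapIso b = a from Equiv.swap_apply_right a b,
    show h.swapIso v = v from Equiv.swap_apply_of_ne_of_ne hva hvb] at hswap

end AreTwins

namespace HkS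

variable {k s : ℕ} {u v w : Fin (2 * k + 1)}

theorem adj_of_succ (h : (v : ℕ) = u + 1) : (HkS k s).Adj u v :=
  ⟨by rintro rfl; omega, .inl (.inl h)⟩

theorem isChain_finRange : (List.finRange (2 * k + 1)).IsChain (HkS k s).Adj :=
  List.isChain_iff_getElem.mpr fun i hi => adj_of_succ (by simp)

theorem adj_iff_of_lt (hs : s ≤ k) (hu : (u : ℕ) < s) :
    (HkS k s).Adj u w ↔ u ≠ w ∧ ((w : ℕ) < s ∨ inC_HkS k s w) := by
  simp only [HkS, fromRel_adj, inC_HkS, ne_eq, Fin.ext_iff]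
  omega

theorem adj_iff_of_gt (hs : s ≤ k) (hu : 2 * k - s < u) :
    (HkS k s).Adj u w ↔ u ≠ w ∧ (2 * k - s < w ∨ inC_HkS k s w) := by
  have := w.isLt
  simp only [HkS, fromRel_adj, inC_HkS, ne_eq, Fin.ext_iff]
  omega

theorem areTwins_of_lt (hs : s ≤ k) (hu : (u : ℕ) < s) (hv : (v : ℕ) < s) :
    AreTwins (HkS k s) u v := fun w hwu hwv => by
  simp only [adj_iff_of_lt hs hu, adj_iff_of_lt hs hv, hwu.symm, hwv.symm, ne_eq,
    not_false_eq_true, true_and]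

theorem areTwins_of_gt (hs : s ≤ k) (hu : 2 * k - s < u) (hv : 2 * k - s < v) :
    AreTwins (HkS k s) u v := fun w hwu hwv => by
  simp only [adj_iff_of_gt hs hu, adj_iff_of_gt hs hv, hwu.symm, hwv.symm, ne_eq,
    not_false_eq_true, true_and]

theorem isHamiltonian_addEdge_of_inC_of_inC (hs₁ : 1 ≤ s) (hs : s ≤ k) (huv : u < v)
    (hu : inC_HkS k s (u + 1)) (hv : inC_HkS k s (v - 1)) :
    (addEdge (HkS k s) u v).IsHamiltonian := by
  have hlt : (u : ℕ) + 1 < v := by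
    unfold inC_HkS at hu hv
    omega
  let u' : Fin (2 * k + 1) := ⟨u + 1, by omega⟩
  let v' : Fin (2 * k + 1) := ⟨v - 1, by omega⟩
  have hlast : (HkS k s).Adj (Fin.last (2 * k)) u' :=
    (adj_iff_of_gt hs (by rw [Fin.val_last]; omega)).mpr
      ⟨Fin.ne_of_val_ne (by rw [Fin.val_last]; dsimp only [u']; omega), .inr hu⟩
  have hfirst : (HkS k s).Adj 0 v' :=
    (adj_iff_of_lt hs (by rw [Fin.val_zero]; exact hs₁)).mpr
      ⟨Fin.ne_of_val_ne (by rw [Fin.val_zero]; dsimp only [v']; omega), .inr hv⟩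
  refine isHamiltonian_of_crossing_chords (l := List.finRange (2 * k + 1))
    (isChain_finRange.imp fun _ _ h => le_addEdge h) (List.nodup_finRange _)
    List.mem_finRange hlt (by simpa using v.is_le) ?_ ?_ ?_
  · simpa using addEdge_adj_self huv.ne
  · simpa [u', Fin.last] using le_addEdge hlast
  · simpa [v'] using le_addEdge hfirst.symm

theorem isHamiltonian_addEdge_of_inC (hs₁ : 1 ≤ s) (hs : s ≤ k) (huv : u < v)
    (hu : inC_HkS k s (u + 1)) (hv : ¬ inC_HkS k s v) :
    (addEdge (HkS k s) u v).IsHamiltonian := by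
  by_cases hpred : inC_HkS k s (v - 1)
  · exact isHamiltonian_addEdge_of_inC_of_inC hs₁ hs huv hu hpred
  have hv_gt : 2 * k - s + 1 < v := by
    unfold inC_HkS at hu hv hpred
    omega
  let b : Fin (2 * k + 1) := ⟨2 * k - s + 1, by omega⟩
  have hub : u < b := Fin.lt_def.mpr (by unfold inC_HkS at hu; dsimp only [b]; omega)
  have hb : (addEdge (HkS k s) u b).IsHamiltonian :=
    isHamiltonian_addEdge_of_inC_of_inC hs₁ hs hub hu (by unfold inC_HkS; dsimp only [b]; omega)
  rw [addEdge_comm] at hb ⊢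
  exact (areTwins_of_gt hs (by omega) (Nat.lt_succ_self _)).isHamiltonian_addEdge huv.ne hub.ne hb

theorem isHamiltonian_addEdge_of_lt (hs₁ : 1 ≤ s) (hs : s ≤ k) (huv : u < v)
    (hadj : ¬ (HkS k s).Adj u v) (hu : ¬ inC_HkS k s u) (hv : ¬ inC_HkS k s v) :
    (addEdge (HkS k s) u v).IsHamiltonian := by
  by_cases hsucc : inC_HkS k s (u + 1)
  · exact isHamiltonian_addEdge_of_inC hs₁ hs huv hsucc hv
  have hu_le : (u : ℕ) ≤ 2 * k - s := by
    by_contra! hu_gt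
    exact hadj ((adj_iff_of_gt hs hu_gt).mpr ⟨huv.ne, .inl (by omega)⟩)
  have hu_lt : (u : ℕ) + 1 < s := by
    unfold inC_HkS at hu hsucc
    omega
  have hv_ge : s ≤ v := by
    by_contra! hv_lt
    exact hadj ((adj_iff_of_lt hs (by omega)).mpr ⟨huv.ne, .inl hv_lt⟩)
  let a : Fin (2 * k + 1) := ⟨s - 1, by omega⟩
  have hav : a < v := Fin.lt_def.mpr (by dsimp only [a]; omega)
  have ha : (addEdge (HkS k s) a v).IsHamiltonian :=
    isHamiltonian_addEdge_of_inC hs₁ hs hav (by unfold inC_HkS; dsimp only [a]; omega) hv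
  exact (areTwins_of_lt hs (by omega) (by dsimp only [a]; omega)).isHamiltonian_addEdge
    huv.ne' hav.ne' ha

theorem isHamiltonian_addEdge (hs₁ : 1 ≤ s) (hs : s ≤ k) (huv : u ≠ v)
    (hadj : ¬ (HkS k s).Adj u v) (hu : ¬ inC_HkS k s u) (hv : ¬ inC_HkS k s v) :
    (addEdge (HkS k s) u v).IsHamiltonian := by
  rcases huv.lt_or_gt with hlt | hgt
  · exact isHamiltonian_addEdge_of_lt hs₁ hs hlt hadj hu hv
  · rw [addEdge_comm]
    exact isHamiltonian_addEdge_of_lt hs₁ hs hgt (mt SimpleGraph.Adj.symm hadj) hv hu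

end HkS

namespace HkM2

variable {k : ℕ} {u v : Fin (2 * k + 1)}

theorem inC_HkS_two_iff {i : ℕ} : inC_HkS k 2 i ↔ inC_HkM2 k i := by
  unfold inC_HkS inC_HkM2
  omega

theorem HkS_two_le (hk : 2 ≤ k) : HkS k 2 ≤ HkM2 k := by
  intro x y hxy
  have hx := x.isLt
  have hy := y.isLt
  simp only [HkS, HkM2, fromRel_adj, inC_HkS, inC_HkM2, ne_eq, Fin.ext_iff] at hxy ⊢
  omega

theorem isHamiltonian_addEdge (hk : 2 ≤ k) (huv : u ≠ v) (hadj : ¬ (HkM2 k).Adj u v)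
    (hu : ¬ inC_HkM2 k u) (hv : ¬ inC_HkM2 k v) : (addEdge (HkM2 k) u v).IsHamiltonian :=
  have hle := HkS_two_le hk
  (HkS.isHamiltonian_addEdge one_le_two hk huv (fun h => hadj (hle h))
    (mt inC_HkS_two_iff.mp hu) (mt inC_HkS_two_iff.mp hv)).mono (addEdge_mono hle)

end HkM2

theorem HkS_HkM2_add_edge_hamiltonian_general (k : ℕ) :
    (∀ s, 1 ≤ s → s ≤ k → ∀ u v : Fin (2 * k + 1), u ≠ v → ¬ (HkS k s).Adj u v →
      ¬ inC_HkS k s u → ¬ inC_HkS k s v →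
      ∃ w, ∃ c : (addEdge (HkS k s) u v).Walk w w, c.IsHamiltonianCycle) ∧
    (2 ≤ k → ∀ u v : Fin (2 * k + 1), u ≠ v → ¬ (HkM2 k).Adj u v →
      ¬ inC_HkM2 k u → ¬ inC_HkM2 k v →
      ∃ w, ∃ c : (addEdge (HkM2 k) u v).Walk w w, c.IsHamiltonianCycle) := by
  constructor
  · intro s hs₁ hs u v huv hadj hu hv
    exact HkS.isHamiltonian_addEdge hs₁ hs huv hadj hu hv (by rw [Fintype.card_fin]; omega)
  · intro hk u v huv hadj hu hv
    exact HkM2.isHamiltonian_addEdge hk huv hadj hu hv (by rw [Fintype.card_fin]; omega)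

/-- Let `k ≥ 4` and `1 ≤ s ≤ k-1`. Adding any new edge joining two
distinct nonadjacent vertices of `A ∪ B ∪ D` (the complement of `C`) of `H_k(s)` yields
a Hamiltonian graph; the same holds for `H_k(M_2)`. -/
theorem HkS_HkM2_add_edge_hamiltonian (k s : ℕ) (hk : 4 ≤ k) (hs1 : 1 ≤ s)
    (hs2 : s ≤ k - 1) :
    (∀ u v : Fin (2 * k + 1), u ≠ v → ¬ (HkS k s).Adj u v →
      ¬ inC_HkS k s (u : ℕ) → ¬ inC_HkS k s (v : ℕ) →
      ∃ (w : Fin (2 * k + 1)) (c : (addEdge (HkS k s) u v).Walk w w),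
        c.IsHamiltonianCycle) ∧
    (∀ u v : Fin (2 * k + 1), u ≠ v → ¬ (HkM2 k).Adj u v →
      ¬ inC_HkM2 k (u : ℕ) → ¬ inC_HkM2 k (v : ℕ) →
      ∃ (w : Fin (2 * k + 1)) (c : (addEdge (HkM2 k) u v).Walk w w),
        c.IsHamiltonianCycle) := by
  have h := HkS_HkM2_add_edge_hamiltonian_general k
  exact ⟨h.1 s hs1 (by omega), h.2 (by omega)⟩
end

section
/- Let k ≥ 5. Every edge of H_k(P_3), except the edges joining a_2 to vertices of B, is contained in a cycle of length 2k in H_k(P_3). Moreover, there is a path on 2k vertices in H_k(P_3) starting at a_1 and ending at a_3. -/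
open SimpleGraph

open SimpleGraph

/-!
Let `B` be the smaller part, with `k - 1` vertices. Two vertices of the larger part are joined by
a path that alternates between the two parts and uses all of `B`; its length is `2 * (k - 1)`, it
can avoid any one other vertex of the larger part, and it can be routed through any edge from `B` to
a vertex that is not the avoided one. Such a path from `a₃` to `a₁` avoiding `a₂` is closed up by
`a₁ a₂ a₃` to a cycle of length `2 * k`; such a path from `a₂` to `a₃` avoiding `a₁`, preceded by
the edge `a₁ a₂`, is a path on `2 * k` vertices.
-/

section CompleteBetween

variable {V : Type*} {G : SimpleGraph V} {P Q : Finset V} {n : ℕ} {x y z q : V}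

lemma isCycle_cons_cons {m : V} {p : G.Walk x y} (hp : p.IsPath) (hxy : x ≠ y)
    (hm : m ∉ p.support) (hym : G.Adj y m) (hmx : G.Adj m x) :
    (Walk.cons hym (Walk.cons hmx p)).IsCycle := by
  have hmp : s(y, m) ∉ p.edges := fun he ↦ hm (p.snd_mem_support_of_mem_edges he)
  simp [Walk.cons_isCycle_iff, Walk.cons_isPath_iff, hp, hm, hmp, hym.ne, hxy.symm]

lemma exists_isPath_cons_cons [DecidableEq V] (h : G.IsCompleteBetween P Q) (hx : x ∈ P)
    (hq : q ∈ Q) (hz : z ∈ P) {p : G.Walk z y} (hp : p.IsPath)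
    (hsupp : ∀ v ∈ p.support, v ∈ P.erase x ∨ v ∈ Q.erase q) :
    ∃ p' : G.Walk x y, p'.IsPath ∧ p'.length = p.length + 2 ∧
      (∀ v ∈ p'.support, v ∈ P ∨ v ∈ Q) ∧ s(x, q) ∈ p'.edges ∧ s(z, q) ∈ p'.edges := by
  have hxQ : x ∉ Q := fun hxQ ↦ G.irrefl (h hx hxQ)
  have hqP : q ∉ P := fun hqP ↦ G.irrefl (h hqP hq)
  have hxp : x ∉ p.support := fun hxp ↦ by simpa [hxQ] using hsupp x hxp
  have hqp : q ∉ p.support := fun hqp ↦ by simpa [hqP] using hsupp q hqp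
  refine ⟨.cons (h hx hq) (.cons (h hz hq).symm p), ?_, rfl, ?_, by simp, by simp [Sym2.eq_swap]⟩
  · simp [Walk.cons_isPath_iff, hp, hxp, hqp, (h hx hq).ne]
  · simp only [Walk.support_cons, List.forall_mem_cons]
    exact ⟨.inl hx, .inr hq, fun v hv ↦
      (hsupp v hv).imp Finset.mem_of_mem_erase Finset.mem_of_mem_erase⟩

lemma isCompleteBetween_erase [DecidableEq V] (h : G.IsCompleteBetween P Q) (x q : V) :
    G.IsCompleteBetween ↑(P.erase x) ↑(Q.erase q) :=
  fun _ ha _ hb ↦ h (Finset.mem_of_mem_erase ha) (Finset.mem_of_mem_erase hb)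

lemma exists_isPath_length_eq_two_mul (h : G.IsCompleteBetween P Q) (hn : 1 ≤ n)
    (hnP : n < P.card) (hnQ : n ≤ Q.card) (hx : x ∈ P) (hy : y ∈ P) (hxy : x ≠ y) :
    ∃ p : G.Walk x y, p.IsPath ∧ p.length = 2 * n ∧ ∀ v ∈ p.support, v ∈ P ∨ v ∈ Q := by
  classical
  induction n, hn using Nat.le_induction generalizing P Q x with
  | base =>
    obtain ⟨q, hq⟩ : Q.Nonempty := Finset.card_pos.mp hnQ
    obtain ⟨p, hp, hlen, hsupp, -⟩ :=
      exists_isPath_cons_cons h hx hq hy .nil (by simp [hy, hxy.symm])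
    exact ⟨p, hp, hlen, hsupp⟩
  | succ n hn ih =>
    obtain ⟨q, hq⟩ : Q.Nonempty := Finset.card_pos.mp (by omega)
    have hcardP := Finset.card_erase_of_mem hx
    have hcardQ := Finset.card_erase_of_mem hq
    obtain ⟨z, hz, hzy⟩ := (P.erase x).exists_mem_ne (by omega) y
    obtain ⟨p₀, hp₀, hlen₀, hsupp₀⟩ := ih (isCompleteBetween_erase h x q)
      (by omega) (by omega) hz (Finset.mem_erase.mpr ⟨hxy.symm, hy⟩) hzy
    obtain ⟨p, hp, hlen, hsupp, -⟩ :=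
      exists_isPath_cons_cons h hx hq (Finset.mem_of_mem_erase hz) hp₀ hsupp₀
    exact ⟨p, hp, by omega, hsupp⟩

lemma exists_isPath_length_eq_two_mul_mem_edges (h : G.IsCompleteBetween P Q) (hn : 2 ≤ n)
    (hnP : n < P.card) (hnQ : n ≤ Q.card) (hx : x ∈ P) (hy : y ∈ P) (hxy : x ≠ y)
    (hz : z ∈ P) (hq : q ∈ Q) :
    ∃ p : G.Walk x y, p.IsPath ∧ p.length = 2 * n ∧ (∀ v ∈ p.support, v ∈ P ∨ v ∈ Q) ∧
      s(z, q) ∈ p.edges := by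
  classical
  wlog hzy : z ≠ y generalizing x y
  · obtain rfl := not_not.mp hzy
    obtain ⟨p, hp, hlen, hsupp, hzq⟩ := this hy hx hxy.symm hxy.symm
    exact ⟨p.reverse, hp.reverse, by simpa using hlen, by simpa using hsupp, by simpa using hzq⟩
  have hcardP := Finset.card_erase_of_mem hx
  have hcardQ := Finset.card_erase_of_mem hq
  -- Start with `x, q, z'`, where `z' = z` unless `z = x`.
  obtain ⟨z', hz', hz'y, hzz'⟩ : ∃ z' ∈ P.erase x, z' ≠ y ∧ (z = x ∨ z = z') := by
    by_cases hzx : z = x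
    · obtain ⟨z', hz', hz'y⟩ := (P.erase x).exists_mem_ne (by omega) y
      exact ⟨z', hz', hz'y, .inl hzx⟩
    · exact ⟨z, Finset.mem_erase.mpr ⟨hzx, hz⟩, hzy, .inr rfl⟩
  obtain ⟨p₀, hp₀, hlen₀, hsupp₀⟩ := exists_isPath_length_eq_two_mul (n := n - 1)
    (isCompleteBetween_erase h x q) (by omega) (by omega) (by omega) hz'
    (Finset.mem_erase.mpr ⟨hxy.symm, hy⟩) hz'y
  obtain ⟨p, hp, hlen, hsupp, hxq, hz'q⟩ :=
    exists_isPath_cons_cons h hx hq (Finset.mem_of_mem_erase hz') hp₀ hsupp₀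
  exact ⟨p, hp, by omega, hsupp, by rcases hzz' with rfl | rfl <;> assumption⟩

lemma exists_isCycle_mem_edges (h : G.IsCompleteBetween P Q) {m : V} (hmP : m ∉ P)
    (hmQ : m ∉ Q) (hn : 2 ≤ n) (hnP : n < P.card) (hnQ : n ≤ Q.card) (hx : x ∈ P) (hy : y ∈ P)
    (hxy : x ≠ y) (hxm : G.Adj x m) (hmy : G.Adj m y) (hz : z ∈ P) (hq : q ∈ Q) :
    ∃ c : G.Walk x x, c.IsCycle ∧ c.length = 2 * (n + 1) ∧
      s(x, m) ∈ c.edges ∧ s(m, y) ∈ c.edges ∧ s(z, q) ∈ c.edges := by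
  obtain ⟨p, hp, hlen, hsupp, hzq⟩ :=
    exists_isPath_length_eq_two_mul_mem_edges h hn hnP hnQ hy hx hxy.symm hz hq
  have hmp : m ∉ p.support := fun hmp ↦ (hsupp m hmp).elim hmP hmQ
  exact ⟨_, isCycle_cons_cons hp hxy.symm hmp hxm hmy,
    by rw [Walk.length_cons, Walk.length_cons, hlen]; ring, by simp, by simp, by simp [hzq]⟩

end CompleteBetween

namespace HkP3

variable {k : ℕ} {u v : Fin (2 * k + 1)}

/-- The part `B` of `H_k(P_3)` as a finset of vertices; its complement is the part `A ∪ C`. -/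
def partB (k : ℕ) : Finset (Fin (2 * k + 1)) :=
  (Finset.Icc 3 (k + 1)).attachFin fun i hi ↦ by rw [Finset.mem_Icc] at hi; omega

lemma mem_partB : v ∈ partB k ↔ inB_HkP3 k v := by
  simp [partB, inB_HkP3]

lemma card_partB (k : ℕ) : (partB k).card = k - 1 := by
  simp [partB]

lemma card_compl_partB_erase (hk : 1 ≤ k) (hv : v ∉ partB k) :
    ((partB k)ᶜ.erase v).card = k + 1 := by
  rw [Finset.card_erase_of_mem (Finset.mem_compl.mpr hv), Finset.card_compl, card_partB,
    Fintype.card_fin]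
  omega

lemma isCompleteBetween_compl_partB_erase (v : Fin (2 * k + 1)) :
    (HkP3 k).IsCompleteBetween ↑((partB k)ᶜ.erase v) ↑(partB k) := by
  intro a ha b hb
  have haB : a ∉ partB k := Finset.mem_compl.mp (Finset.mem_of_mem_erase ha)
  exact ⟨fun hab ↦ haB (hab ▸ hb), .inr (.inr (.inr ⟨mem_partB.mp hb, mem_partB.not.mp haB⟩))⟩

lemma val_one (hk : 1 ≤ k) : ((1 : Fin (2 * k + 1)) : ℕ) = 1 :=
  Nat.mod_eq_of_lt (show 1 < 2 * k + 1 by omega)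

lemma val_two (hk : 1 ≤ k) : ((2 : Fin (2 * k + 1)) : ℕ) = 2 :=
  Nat.mod_eq_of_lt (show 2 < 2 * k + 1 by omega)

lemma zero_ne_two (hk : 1 ≤ k) : (0 : Fin (2 * k + 1)) ≠ 2 :=
  Fin.ne_of_val_ne (by rw [val_two hk]; simp)

lemma zero_notMem_partB (k : ℕ) : 0 ∉ partB k := by
  simp [mem_partB, inB_HkP3]

lemma one_notMem_partB (hk : 1 ≤ k) : 1 ∉ partB k := by
  rw [mem_partB, inB_HkP3, val_one hk]
  omega

lemma two_notMem_partB (hk : 1 ≤ k) : 2 ∉ partB k := by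
  rw [mem_partB, inB_HkP3, val_two hk]
  omega

lemma adj_zero_one (hk : 1 ≤ k) : (HkP3 k).Adj 0 1 :=
  ⟨Fin.ne_of_val_ne (by rw [val_one hk]; simp), .inl (.inl ⟨rfl, val_one hk⟩)⟩

lemma adj_one_two (hk : 1 ≤ k) : (HkP3 k).Adj 1 2 :=
  ⟨Fin.ne_of_val_ne (by rw [val_one hk, val_two hk]; simp),
    .inl (.inr (.inl ⟨val_one hk, val_two hk⟩))⟩

lemma eq_or_eq_or_exists_of_adj (hk : 1 ≤ k) (huv : (HkP3 k).Adj u v) :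
    s(u, v) = s(0, 1) ∨ s(u, v) = s(1, 2) ∨
      ∃ a ∉ partB k, ∃ b ∈ partB k, s(u, v) = s(a, b) := by
  wlog h : ((u : ℕ) = 0 ∧ (v : ℕ) = 1) ∨ ((u : ℕ) = 1 ∧ (v : ℕ) = 2) ∨
      (inB_HkP3 k u ∧ ¬ inB_HkP3 k v) generalizing u v
  · rw [Sym2.eq_swap]
    exact this huv.symm (huv.2.resolve_left h)
  rcases h with ⟨hu, hv⟩ | ⟨hu, hv⟩ | ⟨hu, hv⟩
  · rw [Fin.ext (b := 0) hu, Fin.ext (hv.trans (val_one hk).symm)]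
    exact .inl rfl
  · rw [Fin.ext (hu.trans (val_one hk).symm), Fin.ext (hv.trans (val_two hk).symm)]
    exact .inr (.inl rfl)
  · exact .inr (.inr ⟨v, mem_partB.not.mpr hv, u, mem_partB.mpr hu, Sym2.eq_swap⟩)

lemma exists_isCycle (hk : 3 ≤ k) {a b : Fin (2 * k + 1)} (ha : a ∉ partB k) (ha1 : a ≠ 1)
    (hb : b ∈ partB k) :
    ∃ c : (HkP3 k).Walk 0 0, c.IsCycle ∧ c.length = 2 * k ∧
      s(0, 1) ∈ c.edges ∧ s(1, 2) ∈ c.edges ∧ s(a, b) ∈ c.edges := by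
  have hk1 : 1 ≤ k := by omega
  have hcardP := card_compl_partB_erase hk1 (one_notMem_partB hk1)
  have hcardQ := card_partB k
  have h01 := adj_zero_one hk1
  have h12 := adj_one_two hk1
  obtain ⟨c, hc, hlen, hedges⟩ := exists_isCycle_mem_edges (n := k - 1)
    (isCompleteBetween_compl_partB_erase 1) (by simp) (one_notMem_partB hk1)
    (by omega) (by omega) (by omega) (by simp [h01.ne, zero_notMem_partB])
    (by simp [h12.ne.symm, two_notMem_partB hk1]) (zero_ne_two hk1) h01 h12 (z := a)
    (by simp [ha, ha1]) hb
  exact ⟨c, hc, by omega, hedges⟩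

lemma exists_isPath_zero_two (hk : 2 ≤ k) :
    ∃ p : (HkP3 k).Walk 0 2, p.IsPath ∧ p.support.length = 2 * k := by
  have hk1 : 1 ≤ k := by omega
  have hcardP := card_compl_partB_erase hk1 (zero_notMem_partB k)
  have hcardQ := card_partB k
  have h01 := adj_zero_one hk1
  obtain ⟨p, hp, hlen, hsupp⟩ := exists_isPath_length_eq_two_mul (n := k - 1) (x := 1) (y := 2)
    (isCompleteBetween_compl_partB_erase 0) (by omega) (by omega) (by omega)
    (by simp [h01.ne.symm, one_notMem_partB hk1])
    (by simp [(zero_ne_two hk1).symm, two_notMem_partB hk1]) (adj_one_two hk1).ne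
  have h0p : 0 ∉ p.support := fun h0p ↦ by simpa [zero_notMem_partB] using hsupp 0 h0p
  refine ⟨.cons h01 p, hp.cons h0p, ?_⟩
  rw [Walk.length_support, Walk.length_cons]
  omega

end HkP3

theorem HkP3_edges_on_long_cycle_general (k : ℕ) (hk : 3 ≤ k) :
    (∀ u v : Fin (2 * k + 1), (HkP3 k).Adj u v →
      ¬ ((u : ℕ) = 1 ∧ inB_HkP3 k (v : ℕ)) → ¬ ((v : ℕ) = 1 ∧ inB_HkP3 k (u : ℕ)) →
      ∃ (w : Fin (2 * k + 1)) (c : (HkP3 k).Walk w w),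
        c.IsCycle ∧ c.length = 2 * k ∧ s(u, v) ∈ c.edges) ∧
    (∃ p : (HkP3 k).Walk (0 : Fin (2 * k + 1)) (2 : Fin (2 * k + 1)),
      p.IsPath ∧ p.support.length = 2 * k) := by
  refine ⟨fun u v huv hu hv ↦ ?_, HkP3.exists_isPath_zero_two (by omega)⟩
  have hk1 : 1 ≤ k := by omega
  have h1 : ((1 : Fin (2 * k + 1)) : ℕ) = 1 := HkP3.val_one hk1
  obtain ⟨b₀, hb₀⟩ : (HkP3.partB k).Nonempty :=
    Finset.card_pos.mp (by rw [HkP3.card_partB]; omega)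
  obtain ⟨c₀, hc₀, hlen₀, h01, h12, -⟩ :=
    HkP3.exists_isCycle hk (HkP3.zero_notMem_partB k) (HkP3.adj_zero_one hk1).ne hb₀
  rcases HkP3.eq_or_eq_or_exists_of_adj hk1 huv with he | he | ⟨a, ha, b, hb, he⟩
  · exact ⟨0, c₀, hc₀, hlen₀, he ▸ h01⟩
  · exact ⟨0, c₀, hc₀, hlen₀, he ▸ h12⟩
  · have ha1 : a ≠ 1 := by
      rintro rfl
      rw [HkP3.mem_partB] at hb
      rcases Sym2.eq_iff.mp he with ⟨rfl, rfl⟩ | ⟨rfl, rfl⟩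
      exacts [hu ⟨h1, hb⟩, hv ⟨h1, hb⟩]
    obtain ⟨c, hc, hlen, -, -, hab⟩ := HkP3.exists_isCycle hk ha ha1 hb
    exact ⟨0, c, hc, hlen, he ▸ hab⟩

/-- Let `k ≥ 5`. Every edge of `H_k(P_3)` other than the edges
joining `a_2` (vertex `1`) to `B` lies on a cycle of length `2k`; moreover there is a
path on `2k` vertices from `a_1` (vertex `0`) to `a_3` (vertex `2`). -/
theorem HkP3_edges_on_long_cycle (k : ℕ) (hk : 5 ≤ k) :
    (∀ u v : Fin (2 * k + 1), (HkP3 k).Adj u v →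
      ¬ ((u : ℕ) = 1 ∧ inB_HkP3 k (v : ℕ)) → ¬ ((v : ℕ) = 1 ∧ inB_HkP3 k (u : ℕ)) →
      ∃ (w : Fin (2 * k + 1)) (c : (HkP3 k).Walk w w),
        c.IsCycle ∧ c.length = 2 * k ∧ s(u, v) ∈ c.edges) ∧
    (∃ p : (HkP3 k).Walk (0 : Fin (2 * k + 1)) (2 : Fin (2 * k + 1)),
      p.IsPath ∧ p.support.length = 2 * k) := by
  exact HkP3_edges_on_long_cycle_general k (by omega)
end
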